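/- Let α ∈ ℝⁿ with no coordinate in πℤ, β ∈ (0,n), and f a Schwartz function. Then I_β^α f = F_{-α}( u ↦ (2π)^{-β} |ũ|^{-β} F_α(f)(u) ) as tempered distributions, where ũ = (u₁ csc α₁,...,uₙ csc αₙ). -/

import Mathlib

open MeasureTheory Real SchwartzMap Filter
open scoped FourierTransform

noncomputable section

abbrev Rn (n : ℕ) := EuclideanSpace ℝ (Fin n)

/-- The chirp function `e_α(x) = exp(2πi Σₖ (cot αₖ / 2) xₖ²)`. -/
def chirp {n : ℕ} (α : Rn n) (x : Rn n) : ℂ :=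
  Complex.exp (2 * (π : ℂ) * Complex.I *
    ((∑ k, Real.cot (α k) / 2 * (x k) ^ 2 : ℝ) : ℂ))

/-- The constant `c(α) = ∏ₖ √(1 - i cot αₖ)`. -/
def cConst {n : ℕ} (α : Rn n) : ℂ :=
  ∏ k, (1 - Complex.I * (Real.cot (α k) : ℂ)) ^ ((1 : ℂ) / 2)

/-- The FRFT kernel `K_α(x,u)`. -/
def frftKernel {n : ℕ} (α : Rn n) (x u : Rn n) : ℂ :=
  ∏ k, (1 - Complex.I * (Real.cot (α k) : ℂ)) ^ ((1 : ℂ) / 2) *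
    Complex.exp (2 * (π : ℂ) * Complex.I *
      ((Real.cot (α k) / 2 * ((x k) ^ 2 + (u k) ^ 2)
        - x k * u k / Real.sin (α k) : ℝ) : ℂ))

/-- The multidimensional fractional Fourier transform. -/
def frft {n : ℕ} (α : Rn n) (f : Rn n → ℂ) (u : Rn n) : ℂ :=
  ∫ x, f x * frftKernel α x u

/-- `ũ = (u₁ csc α₁, ..., uₙ csc αₙ)`. -/
def tilde {n : ℕ} (α u : Rn n) : Rn n :=
  (EuclideanSpace.equiv (Fin n) ℝ).symm fun k => u k / Real.sin (α k)

/-- `γ(β) = π^{n/2} 2^β Γ(β/2) / Γ((n-β)/2)`. -/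
def gammaC (n : ℕ) (β : ℝ) : ℝ :=
  π ^ ((n : ℝ) / 2) * 2 ^ β * Real.Gamma (β / 2) / Real.Gamma (((n : ℝ) - β) / 2)

/-- The classical Riesz potential `I_β`. -/
def rieszPot (n : ℕ) (β : ℝ) (f : Rn n → ℂ) (x : Rn n) : ℂ :=
  ((1 / gammaC n β : ℝ) : ℂ) * ∫ y, f y / ((‖x - y‖ ^ ((n : ℝ) - β) : ℝ) : ℂ)

/-- The fractional Riesz potential related to chirp functions `I_β^α`. -/
def rieszPotChirp {n : ℕ} (α : Rn n) (β : ℝ) (f : Rn n → ℂ) (x : Rn n) : ℂ :=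
  ((1 / gammaC n β : ℝ) : ℂ) * chirp (-α) x *
    ∫ y, f y * chirp α y / ((‖x - y‖ ^ ((n : ℝ) - β) : ℝ) : ℂ)

/-- `c_n = Γ((n+1)/2)/π^{(n+1)/2}`. -/
def nConst (n : ℕ) : ℝ := Real.Gamma (((n : ℝ) + 1) / 2) / π ^ (((n : ℝ) + 1) / 2)

/-- The j-th fractional Riesz transform related to chirp functions (principal value). -/
def rieszTransChirp {n : ℕ} (α : Rn n) (j : Fin n) (f : Rn n → ℂ) (x : Rn n) : ℂ :=
  ((nConst n : ℝ) : ℂ) * chirp (-α) x *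
    limUnder (nhdsWithin (0 : ℝ) (Set.Ioi 0)) fun ε =>
      ∫ y in {y : Rn n | ε < dist x y},
        (((x j - y j) / ‖x - y‖ ^ ((n : ℝ) + 1) : ℝ) : ℂ) * f y * chirp α y

/-- Partial derivative in the k-th coordinate direction. -/
def partialD {n : ℕ} (k : Fin n) (g : Rn n → ℂ) (y : Rn n) : ℂ :=
  fderiv ℝ g y (EuclideanSpace.single k 1)

/-- `α` has no coordinate in `πℤ`. -/
def notPiZ {n : ℕ} (α : Rn n) : Prop := ∀ k, ∀ m : ℤ, α k ≠ m * π

lemma chirp_growth {n : ℕ} (α : Rn n) : (chirp α).HasTemperateGrowth := by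
  have h1 : (fun t : ℝ => Complex.exp (Complex.I * t)).HasTemperateGrowth := by
    have key : ∀ m : ℕ, iteratedDeriv m (fun t : ℝ => Complex.exp (Complex.I * t))
        = fun t : ℝ => Complex.I ^ m * Complex.exp (Complex.I * t) := by
      intro m
      induction m with
      | zero => simp
      | succ m ih =>
        rw [iteratedDeriv_succ, ih]
        funext t
        have h : HasDerivAt (fun t : ℝ => Complex.exp (Complex.I * t))
            (Complex.exp (Complex.I * t) * (Complex.I * 1)) t :=
          (((hasDerivAt_id t).ofReal_comp).const_mul Complex.I).cexp
        rw [(h.const_mul (Complex.I ^ m)).deriv]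
        ring
    refine ⟨?_, fun m => ⟨0, 1, fun t => ?_⟩⟩
    · exact (contDiff_const.mul Complex.ofRealCLM.contDiff).cexp
    · rw [norm_iteratedFDeriv_eq_norm_iteratedDeriv, key]
      simp [mul_comm Complex.I, Complex.norm_exp_ofReal_mul_I]
  have h2 : (fun x : Rn n => 2 * π * ∑ k, Real.cot (α k) / 2 * (x k) ^ 2).HasTemperateGrowth := by
    refine (Function.HasTemperateGrowth.const _).fun_mul (Function.HasTemperateGrowth.sum fun k _ => ?_)
    refine (Function.HasTemperateGrowth.const _).fun_mul (Function.HasTemperateGrowth.fun_pow ?_ 2)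
    exact (EuclideanSpace.proj (𝕜 := ℝ) k).hasTemperateGrowth
  convert h1.comp h2 using 1
  funext x
  simp only [chirp, Function.comp]
  congr 1
  push_cast
  ring

lemma exists_schwartz {n : ℕ} (α : Rn n) (f : 𝓢(Rn n, ℂ)) :
    ∃ g : 𝓢(Rn n, ℂ), ∀ x, g x = f x * chirp α x :=
  ⟨SchwartzMap.smulLeftCLM ℂ (chirp α) f, fun x => by
    rw [SchwartzMap.smulLeftCLM_apply_apply (chirp_growth α), smul_eq_mul, mul_comm]⟩

lemma sin_ne {n : ℕ} {α : Rn n} (hα : notPiZ α) (k : Fin n) : Real.sin (α k) ≠ 0 := by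
  intro h
  obtain ⟨m, hm⟩ := Real.sin_eq_zero_iff.1 h
  exact hα k m hm.symm

lemma c_factor {a : ℝ} (h : Real.sin a ≠ 0) :
    (1 - Complex.I * (Real.cot a : ℂ)) ^ ((1 : ℂ) / 2) *
    (1 - Complex.I * (Real.cot (-a) : ℂ)) ^ ((1 : ℂ) / 2) = ((|Real.sin a|⁻¹ : ℝ) : ℂ) := by
  have hneg : Real.cot (-a) = -Real.cot a := by
    simp [Real.cot_eq_cos_div_sin, div_neg]
  rw [hneg]
  obtain ⟨c, hc0⟩ : ∃ c, c = Real.cot a := ⟨_, rfl⟩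
  rw [← hc0]
  set z : ℂ := 1 - Complex.I * (c : ℂ) with hz
  have hre : z.re = 1 := by simp [hz]
  have him : z.im = - c := by simp [hz]
  have harg : z.arg ≠ π := by
    intro h; have := (Complex.arg_eq_pi_iff.1 h).1; linarith
  have hc : 1 - Complex.I * ((-c : ℝ) : ℂ) = (starRingEnd ℂ) z := by
    apply Complex.ext
    · simp [hz]
    · simp [hz]
  have hc2 : ((starRingEnd ℂ) z) ^ ((1 : ℂ) / 2) = (starRingEnd ℂ) (z ^ ((1 : ℂ) / 2)) := by
    have h2 : (starRingEnd ℂ) ((1 : ℂ) / 2) = 1 / 2 := by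
      rw [show ((1 : ℂ) / 2) = ((1/2 : ℝ) : ℂ) by push_cast; rfl, Complex.conj_ofReal]
    rw [Complex.conj_cpow z (1/2) harg, h2]
  rw [hc, hc2, Complex.mul_conj, Complex.normSq_eq_norm_sq]
  congr 1
  have h12 : ((1 : ℂ) / 2) = ((1/2 : ℝ) : ℂ) := by push_cast; rfl
  rw [h12, Complex.norm_cpow_real, ← Real.rpow_natCast, ← Real.rpow_mul (norm_nonneg _)]
  norm_num
  rw [Complex.norm_eq_sqrt_sq_add_sq, hre, him]
  have : (1:ℝ)^2 + (-c)^2 = (|Real.sin a|⁻¹)^2 := by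
    rw [inv_pow, sq_abs, hc0, Real.cot_eq_cos_div_sin]
    field_simp
    linarith [Real.sin_sq_add_cos_sq a]
  rw [this, Real.sqrt_sq (by positivity)]

lemma integrable_mul_rpow {n : ℕ} (hn : 1 ≤ n) {h : Rn n → ℂ} (hi : Integrable h)
    {C : ℝ} (hC : ∀ y, ‖h y‖ ≤ C) (x : Rn n) {a : ℝ} (ha : 0 ≤ a) (han : a < n) :
    Integrable (fun y => ‖h y‖ * ‖x - y‖ ^ (-a)) := by
  have hball : IntegrableOn (fun y : Rn n => ‖h (x - y)‖ * ‖y‖ ^ (-a)) (Metric.ball 0 1) := by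
    refine integrableOn_ball_of_norm_le_rpow (C := C) (α := a) ?_ ?_ ?_ ?_
    · simpa using hn
    · simpa using han
    · refine Eventually.of_forall fun y => ?_
      rw [norm_mul, norm_norm, Real.norm_of_nonneg (by positivity)]
      gcongr
      exact hC _
    · refine ((hi.comp_sub_left x).1.norm).mul ?_
      exact (by fun_prop : Measurable fun y : Rn n => ‖y‖ ^ (-a)).aestronglyMeasurable
  have hout : IntegrableOn (fun y : Rn n => ‖h (x - y)‖ * ‖y‖ ^ (-a)) (Metric.ball 0 1)ᶜ := by
    refine Integrable.mono' ((hi.comp_sub_left x).norm.integrableOn) ?_ ?_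
    · refine (((hi.comp_sub_left x).1.norm).mul ?_).restrict
      exact (by fun_prop : Measurable fun y : Rn n => ‖y‖ ^ (-a)).aestronglyMeasurable
    · refine (ae_restrict_iff' Metric.isOpen_ball.measurableSet.compl).2 (Eventually.of_forall fun y hy => ?_)
      rw [norm_mul, norm_norm, Real.norm_of_nonneg (by positivity)]
      have hy' : 1 ≤ ‖y‖ := by simpa using hy
      exact mul_le_of_le_one_right (norm_nonneg _) (Real.rpow_le_one_of_one_le_of_nonpos hy' (by linarith))
  have h3 : Integrable (fun y : Rn n => ‖h (x - y)‖ * ‖y‖ ^ (-a)) := by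
    rw [← integrableOn_univ, ← Set.union_compl_self (Metric.ball (0 : Rn n) 1)]
    exact hball.union hout
  simpa using h3.comp_sub_left x

lemma subord {n : ℕ} (hn : 1 ≤ n) {h : Rn n → ℂ} (hi : Integrable h)
    {C : ℝ} (hC : ∀ y, ‖h y‖ ≤ C) (x : Rn n) {s : ℝ} (hs : 0 < s) (hsn : 2 * s < n) :
    ∫ t in Set.Ioi (0:ℝ), ((t ^ (s - 1) : ℝ) : ℂ) *
        (∫ y, h y * ((Real.exp (-(π * t * ‖x - y‖ ^ 2)) : ℝ) : ℂ))
      = ((Real.Gamma s * π ^ (-s) : ℝ) : ℂ) * ∫ y, h y * ((‖x - y‖ ^ (-(2 * s)) : ℝ) : ℂ) := by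
  have : Nonempty (Fin n) := ⟨⟨0, hn⟩⟩
  have hne : ∀ᵐ y : Rn n, 0 < ‖x - y‖ := by
    have : ∀ᵐ y : Rn n, y ≠ x := by simp [ae_iff]
    filter_upwards [this] with y hy
    exact norm_pos_iff.2 (sub_ne_zero.2 hy.symm)
  have hval : ∀ r : ℝ, 0 < r → ∫ t in Set.Ioi (0:ℝ), t ^ (s - 1) * Real.exp (-(π * t * r ^ 2))
      = Real.Gamma s * π ^ (-s) * r ^ (-(2 * s)) := by
    intro r hr
    have := Real.integral_rpow_mul_exp_neg_mul_Ioi hs (by positivity : 0 < π * r ^ 2)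
    have e : ∀ t : ℝ, π * t * r ^ 2 = π * r ^ 2 * t := fun t => by ring
    simp_rw [e]
    rw [this, one_div, Real.inv_rpow (by positivity), Real.mul_rpow (by positivity) (by positivity),
      Real.rpow_neg (by positivity), Real.rpow_neg (by positivity), Real.rpow_mul (by positivity)]
    norm_num
    ring
  have hint : ∀ r : ℝ, 0 < r →
      IntegrableOn (fun t : ℝ => t ^ (s - 1) * Real.exp (-(π * t * r ^ 2))) (Set.Ioi 0) := by
    intro r hr
    by_contra hcon
    have := hval r hr
    rw [integral_undef hcon] at this
    have : 0 < Real.Gamma s * π ^ (-s) * r ^ (-(2 * s)) := by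
      have := Real.Gamma_pos_of_pos hs
      positivity
    linarith
  set F : Rn n → ℝ → ℂ := fun y t => h y * ((t ^ (s - 1) * Real.exp (-(π * t * ‖x - y‖ ^ 2)) : ℝ) : ℂ) with hF
  have hFn : ∀ y, ∫ t in Set.Ioi (0:ℝ), ‖F y t‖ =
      ‖h y‖ * ∫ t in Set.Ioi (0:ℝ), t ^ (s - 1) * Real.exp (-(π * t * ‖x - y‖ ^ 2)) := by
    intro y
    rw [← integral_const_mul]
    refine setIntegral_congr_fun measurableSet_Ioi fun t ht => ?_
    have ht : 0 < t := ht
    simp only [hF, norm_mul, Complex.norm_real]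
    rw [Real.norm_of_nonneg (by positivity), Real.norm_of_nonneg (by positivity)]
  have hprod : Integrable (Function.uncurry F) (volume.prod (volume.restrict (Set.Ioi (0:ℝ)))) := by
    refine (integrable_prod_iff ?_).2 ⟨?_, ?_⟩
    · refine (hi.1.comp_fst).mul ?_
      refine Measurable.aestronglyMeasurable ?_
      fun_prop
    · filter_upwards [hne] with y hy
      exact (Integrable.ofReal (𝕜 := ℂ) (hint _ hy)).const_mul (h y)
    · simp only [Function.uncurry]
      refine ((integrable_mul_rpow hn hi hC x (by positivity) hsn).const_mul
        (Real.Gamma s * π ^ (-s))).congr ?_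
      filter_upwards [hne] with y hy
      rw [hFn, hval _ hy]
      ring
  have hsw := integral_integral_swap hprod
  have e1 : ∫ t in Set.Ioi (0:ℝ), ((t ^ (s - 1) : ℝ) : ℂ) *
        (∫ y, h y * ((Real.exp (-(π * t * ‖x - y‖ ^ 2)) : ℝ) : ℂ))
      = ∫ t in Set.Ioi (0:ℝ), ∫ y, F y t := by
    refine integral_congr_ae (Eventually.of_forall fun t => ?_)
    simp only
    rw [← integral_const_mul]
    refine integral_congr_ae (Eventually.of_forall fun y => ?_)
    simp only [hF]
    push_cast
    ring
  rw [e1, ← hsw, ← integral_const_mul]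
  refine integral_congr_ae ?_
  filter_upwards [hne] with y hy
  simp only [hF]
  rw [integral_const_mul, integral_complex_ofReal, hval _ hy]
  push_cast
  ring

lemma gauss_id {n : ℕ} (g : 𝓢(Rn n, ℂ)) (x : Rn n) {t : ℝ} (ht : 0 < t) :
    ∫ y, g y * ((Real.exp (-(π * t * ‖x - y‖ ^ 2)) : ℝ) : ℂ)
      = ((t ^ (-((n : ℝ) / 2)) : ℝ) : ℂ) *
        ∫ ξ, (𝓕 (g : Rn n → ℂ) ξ * Complex.exp (2 * π * Complex.I * (inner ℝ x ξ : ℝ))) *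
          ((Real.exp (-(π * t⁻¹ * ‖(0 : Rn n) - ξ‖ ^ 2)) : ℝ) : ℂ) := by
  set b : ℂ := ((π / t : ℝ) : ℂ) with hb
  have hbre : 0 < b.re := by simp only [hb, Complex.ofReal_re]; positivity
  have hG : Integrable (fun v : Rn n => Complex.exp (-b * ‖v‖ ^ 2 + 2 * π * Complex.I * (inner ℝ x v : ℝ))) := 
    GaussianFourier.integrable_cexp_neg_mul_sq_norm_add hbre _ _
  have key := VectorFourier.integral_fourierIntegral_smul_eq_flip (μ := (volume : Measure (Rn n)))
    (ν := (volume : Measure (Rn n))) (L := innerₗ (Rn n)) Real.continuous_fourierChar continuous_inner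
    g.integrable hG
  have e1 : ∀ ξ, VectorFourier.fourierIntegral 𝐞 volume (innerₗ (Rn n)) g ξ = 𝓕 (g : Rn n → ℂ) ξ := fun _ => rfl
  have e2 : ∀ w, VectorFourier.fourierIntegral 𝐞 volume (innerₗ (Rn n)).flip (fun v : Rn n => Complex.exp (-b * ‖v‖ ^ 2 + 2 * π * Complex.I * (inner ℝ x v : ℝ))) w
     = ((t ^ ((n : ℝ) / 2) : ℝ) : ℂ) * ((Real.exp (-(π * t * ‖x - w‖ ^ 2)) : ℝ) : ℂ) := by
    intro w
    rw [flip_innerₗ]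
    refine (fourier_gaussian_innerProductSpace' hbre x w).trans ?_
    congr 1
    · have : (π : ℂ) / b = ((t : ℝ) : ℂ) := by
        rw [hb]; push_cast; field_simp
      rw [this, Complex.ofReal_cpow ht.le]
      simp
    · rw [Complex.ofReal_exp]
      congr 1
      rw [hb]; push_cast; field_simp
  simp only [e1, e2, smul_eq_mul] at key
  have e3 : ∫ ξ, (𝓕 (g : Rn n → ℂ) ξ * Complex.exp (2 * π * Complex.I * (inner ℝ x ξ : ℝ))) *
          ((Real.exp (-(π * t⁻¹ * ‖(0 : Rn n) - ξ‖ ^ 2)) : ℝ) : ℂ)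
      = ∫ ξ, 𝓕 (g : Rn n → ℂ) ξ * Complex.exp (-b * ‖ξ‖ ^ 2 + 2 * π * Complex.I * (inner ℝ x ξ : ℝ)) := by
    refine integral_congr_ae (Eventually.of_forall fun ξ => ?_)
    simp only
    rw [Complex.exp_add, Complex.ofReal_exp, zero_sub, norm_neg, mul_assoc, mul_comm (Complex.exp _)]
    congr 3
    rw [hb]; push_cast; field_simp
  rw [e3, key, ← integral_const_mul]
  refine integral_congr_ae (Eventually.of_forall fun y => ?_)
  simp only
  have : ((t ^ (-((n : ℝ) / 2)) : ℝ) : ℂ) * ((t ^ ((n : ℝ) / 2) : ℝ) : ℂ) = 1 := by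
    rw [← Complex.ofReal_mul, ← Real.rpow_add ht]; simp
  linear_combination (-(g y * ((Real.exp (-(π * t * ‖x - y‖ ^ 2)) : ℝ) : ℂ))) * this

lemma riesz_id {n : ℕ} (β : ℝ) (hβ : 0 < β) (hβn : β < n) (g : 𝓢(Rn n, ℂ)) (x : Rn n) :
    ((1 / gammaC n β : ℝ) : ℂ) * ∫ y, g y / ((‖x - y‖ ^ ((n : ℝ) - β) : ℝ) : ℂ)
      = ∫ ξ, (((2 * π) ^ (-β) * ‖ξ‖ ^ (-β) : ℝ) : ℂ) *
        (𝓕 (g : Rn n → ℂ) ξ * Complex.exp (2 * π * Complex.I * (inner ℝ x ξ : ℝ))) := by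
  have hn : 1 ≤ n := by
    have : (0 : ℝ) < n := hβ.trans hβn
    exact_mod_cast this
  obtain ⟨C, hC⟩ : ∃ C, ∀ y, ‖g y‖ ≤ C :=
    ⟨_, fun y => SchwartzMap.norm_le_seminorm ℝ g y⟩
  set G : 𝓢(Rn n, ℂ) := 𝓕 g with hGdef
  have hG : ∀ ξ, 𝓕 (g : Rn n → ℂ) ξ = G ξ := fun ξ => by
    rw [hGdef, SchwartzMap.fourier_coe]
  set H : Rn n → ℂ := fun ξ => 𝓕 (g : Rn n → ℂ) ξ * Complex.exp (2 * π * Complex.I * (inner ℝ x ξ : ℝ)) with hH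
  have hexp : ∀ ξ, ‖Complex.exp (2 * π * Complex.I * (inner ℝ x ξ : ℝ))‖ = 1 := by
    intro ξ
    rw [show 2 * π * Complex.I * (inner ℝ x ξ : ℝ) = ((2 * π * inner ℝ x ξ : ℝ) : ℂ) * Complex.I by
      push_cast; ring, Complex.norm_exp_ofReal_mul_I]
  have hHn : ∀ ξ, ‖H ξ‖ = ‖G ξ‖ := fun ξ => by
    simp only [hH]; rw [norm_mul, hexp, mul_one, hG]
  have hHi : Integrable H := by
    refine G.integrable.mono ?_ (Eventually.of_forall fun ξ => (hHn ξ).le)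
    have : Continuous H := by
      simp only [hH, hG]
      have := G.continuous
      fun_prop
    exact this.aestronglyMeasurable
  obtain ⟨D, hD⟩ : ∃ D, ∀ y, ‖H y‖ ≤ D :=
    ⟨_, fun y => (hHn y).trans_le (SchwartzMap.norm_le_seminorm ℝ G y)⟩
  have s1 := subord hn g.integrable hC x (s := ((n : ℝ) - β) / 2) (by linarith) (by linarith)
  have s2 := subord hn hHi hD 0 (s := β / 2) (by linarith) (by linarith)
  have mid : ∫ t in Set.Ioi (0:ℝ), ((t ^ (((n : ℝ) - β) / 2 - 1) : ℝ) : ℂ) *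
        (∫ y, g y * ((Real.exp (-(π * t * ‖x - y‖ ^ 2)) : ℝ) : ℂ))
      = ∫ t in Set.Ioi (0:ℝ), ((t ^ (β / 2 - 1) : ℝ) : ℂ) *
        (∫ y, H y * ((Real.exp (-(π * t * ‖0 - y‖ ^ 2)) : ℝ) : ℂ)) := by
    symm
    rw [← integral_comp_rpow_Ioi _ (by norm_num : (-1 : ℝ) ≠ 0)]
    refine setIntegral_congr_fun measurableSet_Ioi fun t ht => ?_
    have ht : 0 < t := ht
    beta_reduce
    symm
    rw [gauss_id g x ht, Real.rpow_neg_one, Complex.real_smul, ← mul_assoc, ← mul_assoc,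
      ← Complex.ofReal_mul, ← Complex.ofReal_mul]
    congr 2
    rw [← Real.rpow_neg_one t, ← Real.rpow_mul ht.le, ← Real.rpow_add ht]
    simp only [abs_neg, abs_one, one_mul]
    rw [← Real.rpow_add ht]
    congr 1
    ring
  rw [s1, s2] at mid
  have l1 : ∫ y, g y / ((‖x - y‖ ^ ((n : ℝ) - β) : ℝ) : ℂ)
      = ∫ y, g y * ((‖x - y‖ ^ (-(2 * (((n : ℝ) - β) / 2))) : ℝ) : ℂ) := by
    congr 1; funext y
    rw [show -(2 * (((n : ℝ) - β) / 2)) = -((n : ℝ) - β) by ring, Real.rpow_neg (norm_nonneg _),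
      Complex.ofReal_inv, div_eq_mul_inv]
  have l2 : ∫ ξ, (((2 * π) ^ (-β) * ‖ξ‖ ^ (-β) : ℝ) : ℂ) * H ξ
      = (((2 * π) ^ (-β) : ℝ) : ℂ) * ∫ y, H y * ((‖0 - y‖ ^ (-(2 * (β / 2))) : ℝ) : ℂ) := by
    rw [← integral_const_mul]
    congr 1; funext y
    rw [show -(2 * (β / 2)) = -β by ring, zero_sub, norm_neg]
    push_cast; ring
  have p1 : 0 < Real.Gamma (((n : ℝ) - β) / 2) := Real.Gamma_pos_of_pos (by linarith)
  have p2 : 0 < Real.Gamma (β / 2) := Real.Gamma_pos_of_pos (by linarith)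
  have q1 : 1 / gammaC n β = ((2 * π) ^ (-β) / (Real.Gamma (β / 2) * π ^ (-(β / 2)))) *
      (Real.Gamma (((n : ℝ) - β) / 2) * π ^ (-(((n : ℝ) - β) / 2))) := by
    rw [gammaC, Real.mul_rpow (by norm_num) (by positivity), Real.rpow_neg (by norm_num : (0:ℝ) ≤ 2)]
    have r1 : π ^ (-(((n : ℝ) - β) / 2)) = π ^ (β / 2) / π ^ ((n : ℝ) / 2) := by
      rw [← Real.rpow_sub pi_pos]; congr 1; ring
    have r2 : π ^ (-β) = (π ^ (β / 2) * π ^ (β / 2))⁻¹ := by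
      rw [← Real.rpow_add pi_pos, ← Real.rpow_neg pi_pos.le]; congr 1; ring
    rw [r1, r2, Real.rpow_neg pi_pos.le]
    field_simp
  rw [l1, l2, q1, Complex.ofReal_mul, mul_assoc, mid, ← mul_assoc, ← Complex.ofReal_mul]
  congr 2
  field_simp

lemma integral_tilde {n : ℕ} {α : Rn n} (hα : notPiZ α) (F : Rn n → ℂ) :
    ∫ u, F (tilde α u) = ((∏ k, |Real.sin (α k)| : ℝ) : ℂ) * ∫ v, F v := by
  let b := (EuclideanSpace.basisFun (Fin n) ℝ).toBasis
  let L : Rn n →ₗ[ℝ] Rn n := Matrix.toLin b b (Matrix.diagonal fun k => (Real.sin (α k))⁻¹)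
  have hdet : LinearMap.det L = ∏ k, (Real.sin (α k))⁻¹ := by
    simp only [L]
    rw [LinearMap.det_toLin, Matrix.det_diagonal]
  have hdet0 : LinearMap.det L ≠ 0 := by
    rw [hdet]; exact Finset.prod_ne_zero_iff.2 fun k _ => inv_ne_zero (sin_ne hα k)
  have hL : ∀ u, L u = tilde α u := by
    intro u
    ext k
    simp only [L, b]
    rw [Matrix.toLin_apply]
    simp [tilde, Matrix.mulVec_diagonal, div_eq_inv_mul, Pi.single_apply]
  let e : Rn n ≃L[ℝ] Rn n := (LinearEquiv.ofIsUnitDet (f := L) (v := b) (v' := b) (by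
    rw [LinearMap.det_toMatrix]; exact isUnit_iff_ne_zero.2 hdet0)).toContinuousLinearEquiv
  have he : ∀ u, e u = tilde α u := fun u => hL u
  have hm := Measure.map_linearMap_addHaar_eq_smul_addHaar (volume : Measure (Rn n)) hdet0
  have : ∫ u, F (tilde α u) = ∫ v, F v ∂(Measure.map L volume) := by
    have : (L : Rn n → Rn n) = e.toHomeomorph.toMeasurableEquiv := rfl
    rw [this, integral_map_equiv, ← this]
    simp only [hL]
  rw [this, hm, integral_smul_measure, ENNReal.toReal_ofReal (abs_nonneg _), hdet,
    Complex.real_smul, Finset.prod_inv_distrib, inv_inv, Finset.abs_prod]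

theorem kernel_eq {n : ℕ} (α : Rn n) (x u : Rn n) :
    frftKernel α x u = cConst α * chirp α x * chirp α u *
      Complex.exp (-(2 * π * Complex.I * (inner ℝ x (tilde α u) : ℝ))) := by
  rw [frftKernel, Finset.prod_mul_distrib, ← Complex.exp_sum, cConst, chirp, chirp,
    mul_assoc (∏ k, _), mul_assoc (∏ k, _), ← Complex.exp_add, ← Complex.exp_add]
  congr 2
  simp only [PiLp.inner_apply, tilde]
  push_cast
  simp only [Finset.mul_sum, ← Finset.sum_add_distrib, ← Finset.sum_neg_distrib]
  refine Finset.sum_congr rfl fun k _ => ?_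
  simp
  ring

lemma chirp_mul_neg {n : ℕ} (α : Rn n) (x : Rn n) : chirp α x * chirp (-α) x = 1 := by
  rw [chirp, chirp, ← Complex.exp_add, ← Complex.exp_zero]
  congr 1
  simp [Real.cot_eq_cos_div_sin, div_neg, neg_div]

lemma cConst_mul {n : ℕ} {α : Rn n} (hα : notPiZ α) :
    cConst α * cConst (-α) * ((∏ k, |Real.sin (α k)| : ℝ) : ℂ) = 1 := by
  rw [cConst, cConst, ← Finset.prod_mul_distrib, Complex.ofReal_prod, ← Finset.prod_mul_distrib]
  refine Finset.prod_eq_one fun k _ => ?_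
  have hk := sin_ne hα k
  rw [PiLp.neg_apply, c_factor hk, ← Complex.ofReal_mul, inv_mul_cancel₀ (abs_ne_zero.2 hk),
    Complex.ofReal_one]

lemma inner_tilde {n : ℕ} (α : Rn n) (x u : Rn n) :
    inner ℝ u (tilde (-α) x) = - inner ℝ x (tilde α u) := by
  simp only [PiLp.inner_apply, tilde, ← Finset.sum_neg_distrib]
  refine Finset.sum_congr rfl fun k _ => ?_
  simp [div_neg]
  ring

lemma frft_eq {n : ℕ} (α : Rn n) (f : 𝓢(Rn n, ℂ)) (g : 𝓢(Rn n, ℂ))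
    (hg : ∀ x, g x = f x * chirp α x) (u : Rn n) :
    frft α f u = cConst α * chirp α u * 𝓕 (g : Rn n → ℂ) (tilde α u) := by
  rw [frft, Real.fourier_eq', ← integral_const_mul]
  congr 1; funext x
  rw [hg, kernel_eq, smul_eq_mul]
  rw [show ((-2 * π * inner ℝ x (tilde α u) : ℝ) : ℂ) * Complex.I =
    -(2 * π * Complex.I * (inner ℝ x (tilde α u) : ℝ)) by push_cast; ring]
  ring

/-- `I_β^α f = F_{-α}(m_β^α ⋅ F_α f)` as tempered distributions. -/
theorem rieszPotChirp_eq_frft_symbol {n : ℕ} (α : Rn n) (hα : notPiZ α)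
    (β : ℝ) (hβ : 0 < β) (hβn : β < n) (f : 𝓢(Rn n, ℂ)) (φ : 𝓢(Rn n, ℂ)) :
    ∫ x, rieszPotChirp α β (⇑f) x * φ x
      = ∫ x, frft (-α)
          (fun u => (((2 * π) ^ (-β) * ‖tilde α u‖ ^ (-β) : ℝ) : ℂ) * frft α (⇑f) u) x
          * φ x := by
  obtain ⟨g, hg⟩ := exists_schwartz α f
  congr 1; funext x
  congr 1
  rw [rieszPotChirp]
  simp_rw [← hg]
  rw [mul_right_comm, riesz_id β hβ hβn g x, frft]
  set F : Rn n → ℂ := fun ξ => (((2 * π) ^ (-β) * ‖ξ‖ ^ (-β) : ℝ) : ℂ) *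
        (𝓕 (g : Rn n → ℂ) ξ * Complex.exp (2 * π * Complex.I * (inner ℝ x ξ : ℝ))) with hF
  have e : ∀ u, (((2 * π) ^ (-β) * ‖tilde α u‖ ^ (-β) : ℝ) : ℂ) * frft α (⇑f) u *
      frftKernel (-α) u x = cConst α * cConst (-α) * chirp (-α) x * F (tilde α u) := by
    intro u
    rw [frft_eq α f g hg, kernel_eq, inner_tilde, hF]
    beta_reduce
    rw [show -(2 * π * Complex.I * ((-inner ℝ x (tilde α u) : ℝ) : ℂ)) =
      2 * π * Complex.I * (inner ℝ x (tilde α u) : ℝ) by push_cast; ring]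
    generalize Complex.exp (2 * π * Complex.I * (inner ℝ x (tilde α u) : ℝ)) = E
    generalize (((2 * π) ^ (-β) * ‖tilde α u‖ ^ (-β) : ℝ) : ℂ) = m
    generalize 𝓕 (g : Rn n → ℂ) (tilde α u) = G
    linear_combination (m * cConst α * G * cConst (-α) * chirp (-α) x * E) * chirp_mul_neg α u
  simp_rw [e]
  rw [integral_const_mul, integral_tilde hα]
  linear_combination (-((∫ ξ, F ξ) * chirp (-α) x)) * cConst_mul hα
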